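/- Let X be a topological space and R ⊆ X. Player α has a winning strategy in the Banach–Mazur game BM(R) on X if and only if R is residual in X (its complement is meager). -/

import Mathlib

open Set Topology

/-- `σ` is a winning strategy for player α in the Banach–Mazur game `BM(R)`:
given any history ending with a (nonempty open) move `W` of β, α answers with a
nonempty open subset of `W`, and for every play compatible with `σ` the
intersection of α's moves is contained in `R`. -/
def BMAlphaWinning {X : Type*} [TopologicalSpace X] (R : Set X)
    (σ : List (Set X) → Set X) : Prop :=
  (∀ l : List (Set X), ∀ W : Set X, IsOpen W → W.Nonempty →
    IsOpen (σ (l ++ [W])) ∧ (σ (l ++ [W])).Nonempty ∧ σ (l ++ [W]) ⊆ W) ∧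
  ∀ V : ℕ → Set X, (∀ n, IsOpen (V n) ∧ (V n).Nonempty) →
    (∀ n : ℕ, V (n + 1) ⊆ σ (List.ofFn fun i : Fin (n + 1) => V i.1)) →
    (⋂ n : ℕ, σ (List.ofFn fun i : Fin (n + 1) => V i.1)) ⊆ R

/-!
A residual set `R` contains `⋂ n, D n` for some dense open sets `D n`, and α wins by answering the
`n`-th move `V n` with `V n ∩ D n`. Conversely, from a winning strategy one builds a tree of
positions in which, after each position, a maximal family of moves of β with pairwise disjoint
answers is retained. By maximality these answers are dense in the previous one, so the points
lying in an answer at every level form a residual set. By disjointness the positions containing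
such a point form a single branch, that is, a play against the strategy; hence the point is in `R`.
-/

open PiNat (res)

theorem exists_pairwiseDisjoint_forall_inter_nonempty {ι α : Type*} {B : ι → Set α} {t : Set ι}
    (hB : ∀ i ∈ t, (B i).Nonempty) :
    ∃ u ⊆ t, u.PairwiseDisjoint B ∧ ∀ i ∈ t, ∃ j ∈ u, (B i ∩ B j).Nonempty := by
  -- Vitali's selection with all radii equal keeps a maximal disjoint subfamily.
  obtain ⟨u, hut, hu, hmax⟩ := Vitali.exists_disjoint_subfamily_covering_enlargement B t
    (fun _ => 0) 2 one_lt_two (fun _ _ => le_rfl) 0 (fun _ _ => le_rfl) hB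
  exact ⟨u, hut, hu, fun i hi => (hmax i hi).imp fun _ h => ⟨h.1, h.2.1⟩⟩

section DenseFamilies

variable {X : Type*} [TopologicalSpace X]

theorem exists_seq_isOpen_dense_iInter_subset {R : Set X} (hR : R ∈ residual X) :
    ∃ D : ℕ → Set X, (∀ n, IsOpen (D n)) ∧ (∀ n, Dense (D n)) ∧ ⋂ n, D n ⊆ R := by
  obtain ⟨S, hSo, hSd, hSc, hSR⟩ := mem_residual_iff.1 hR
  obtain ⟨D, hD⟩ := (hSc.insert univ).exists_eq_range (insert_nonempty _ _)
  have hDS : ∀ n, D n = univ ∨ D n ∈ S := fun n => hD.symm.subset (mem_range_self n)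
  refine ⟨D, fun n => ?_, fun n => ?_, ?_⟩
  · exact (hDS n).elim (fun h => h ▸ isOpen_univ) (hSo _)
  · exact (hDS n).elim (fun h => h ▸ dense_univ) (hSd _)
  · rw [← sInter_range, ← hD]
    exact (sInter_subset_sInter (subset_insert _ _)).trans hSR

theorem exists_pairwiseDisjoint_interior_subset_closure_biUnion {f : Set X → Set X}
    (hf : ∀ W, IsOpen W → W.Nonempty → (f W).Nonempty ∧ f W ⊆ W) (U : Set X) :
    ∃ F : Set (Set X), (∀ W ∈ F, IsOpen W ∧ W.Nonempty ∧ W ⊆ U) ∧ F.PairwiseDisjoint f ∧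
      interior U ⊆ closure (⋃ W ∈ F, f W) := by
  obtain ⟨F, hF, hdisj, hmax⟩ := exists_pairwiseDisjoint_forall_inter_nonempty (B := f)
    (t := {W | IsOpen W ∧ W.Nonempty ∧ W ⊆ U}) fun W hW => (hf W hW.1 hW.2.1).1
  refine ⟨F, hF, hdisj, fun x hx => mem_closure_iff.2 fun O hO hxO => ?_⟩
  have hWo : IsOpen (O ∩ interior U) := hO.inter isOpen_interior
  have hWne : (O ∩ interior U).Nonempty := ⟨x, hxO, hx⟩
  obtain ⟨W, hW, y, hy, hyW⟩ :=
    hmax (O ∩ interior U) ⟨hWo, hWne, inter_subset_right.trans interior_subset⟩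
  exact ⟨y, ((hf _ hWo hWne).2 hy).1, mem_biUnion hW hyW⟩

end DenseFamilies

section Schemes

variable {α β : Type*} {A : List β → Set α}

theorem eq_of_mem_cantorScheme (hanti : CantorScheme.Antitone A) (hdisj : CantorScheme.Disjoint A)
    {x : α} : ∀ {l l' : List β}, l.length = l'.length → x ∈ A l → x ∈ A l' → l = l'
  | [], [], _, _, _ => rfl
  | a :: l, b :: l', hlen, hx, hx' => by
    obtain rfl : l = l' := eq_of_mem_cantorScheme hanti hdisj (Nat.succ_injective hlen)
      (hanti l a hx) (hanti l' b hx')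
    rw [(hdisj l).eq (not_disjoint_iff.2 ⟨x, hx, hx'⟩)]

theorem iInter_iUnion_length_subset_iUnion_iInter_res (hanti : CantorScheme.Antitone A)
    (hdisj : CantorScheme.Disjoint A) :
    ⋂ n : ℕ, ⋃ l : List β, ⋃ _ : l.length = n, A l ⊆ ⋃ b : ℕ → β, ⋂ n, A (res b n) := by
  intro x hx
  simp only [mem_iInter, mem_iUnion, exists_prop] at hx
  choose L hlen hxL using hx
  have hcons : ∀ n, ∃ a, L (n + 1) = a :: L n := by
    intro n
    obtain ⟨a, l, hl⟩ := List.exists_cons_of_length_eq_add_one (hlen (n + 1))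
    have hxl : x ∈ A l := hanti l a (hl ▸ hxL (n + 1))
    have hln : l.length = (L n).length := by grind
    exact ⟨a, eq_of_mem_cantorScheme hanti hdisj hln hxl (hxL n) ▸ hl⟩
  choose b hb using hcons
  have hres : ∀ n, res b n = L n := by
    intro n
    induction n with
    | zero => exact (List.length_eq_zero_iff.1 (hlen 0)).symm
    | succ n ih => rw [PiNat.res_succ, ih, hb]
  exact mem_iUnion.2 ⟨b, mem_iInter.2 fun n => hres n ▸ hxL n⟩

theorem dense_iUnion_length_eq [TopologicalSpace α] (hnil : Dense (A []))
    (hchild : ∀ l, A l ⊆ closure (⋃ a, A (a :: l))) :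
    ∀ n : ℕ, Dense (⋃ l : List β, ⋃ _ : l.length = n, A l)
  | 0 => hnil.mono (subset_iUnion₂_of_subset [] rfl subset_rfl)
  | n + 1 => by
    refine dense_closure.1 ((dense_iUnion_length_eq hnil hchild n).mono ?_)
    refine iUnion₂_subset fun l hl => (hchild l).trans (closure_mono ?_)
    exact iUnion_subset fun a => subset_iUnion₂_of_subset (a :: l) (by rw [List.length_cons, hl])
      subset_rfl

theorem iUnion_iInter_res_mem_residual [TopologicalSpace α] (hanti : CantorScheme.Antitone A)
    (hdisj : CantorScheme.Disjoint A) (hopen : ∀ l, IsOpen (A l)) (hnil : Dense (A []))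
    (hchild : ∀ l, A l ⊆ closure (⋃ a, A (a :: l))) :
    ⋃ b : ℕ → β, ⋂ n, A (res b n) ∈ residual α := by
  refine Filter.mem_of_superset (countable_iInter_mem.2 fun n => ?_)
    (iInter_iUnion_length_subset_iUnion_iInter_res hanti hdisj)
  exact residual_of_dense_open (isOpen_biUnion fun l _ => hopen l)
    (dense_iUnion_length_eq hnil hchild n)

theorem reverse_res (b : ℕ → β) (n : ℕ) :
    (res b n).reverse = List.ofFn fun i : Fin n => b i := by
  induction n with
  | zero => rfl
  | succ n ih =>
    rw [PiNat.res_succ, List.reverse_cons, ih, List.ofFn_succ_last]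
    rfl

end Schemes

section Pruning

variable {α β : Type*} {U : List β → Set α} {F : List β → Set α → Set β}

/-- The subscheme of `U`, with root `univ`, in which `a` is kept as a child of `l` when it belongs
to `F l S`, where `S` is the set at `l` of the subscheme; the sets at the other children are `∅`. -/
def prunedScheme (U : List β → Set α) (F : List β → Set α → Set β) : List β → Set α
  | [] => univ
  | a :: l => {x ∈ U (a :: l) | a ∈ F l (prunedScheme U F l)}

theorem prunedScheme_cons_of_mem {l : List β} {a : β} (ha : a ∈ F l (prunedScheme U F l)) :
    prunedScheme U F (a :: l) = U (a :: l) :=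
  sep_eq_self_iff_mem_true.2 fun _ _ => ha

theorem antitone_prunedScheme (hsub : ∀ l S, ∀ a ∈ F l S, U (a :: l) ⊆ S) :
    CantorScheme.Antitone (prunedScheme U F) :=
  fun l a _ hx => hsub l _ a hx.2 hx.1

theorem disjoint_prunedScheme (hdisj : ∀ l S, (F l S).PairwiseDisjoint fun a => U (a :: l)) :
    CantorScheme.Disjoint (prunedScheme U F) :=
  fun l _ _ hab => disjoint_left.2 fun _ hx hx' =>
    disjoint_left.1 (hdisj l _ hx.2 hx'.2 hab) hx.1 hx'.1

theorem isOpen_prunedScheme [TopologicalSpace α]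
    (hopen : ∀ l S, ∀ a ∈ F l S, IsOpen (U (a :: l))) : ∀ l, IsOpen (prunedScheme U F l)
  | [] => isOpen_univ
  | a :: l => by
    by_cases ha : a ∈ F l (prunedScheme U F l)
    · exact prunedScheme_cons_of_mem ha ▸ hopen l _ a ha
    · simp only [prunedScheme, ha, and_false, ofPred_false, isOpen_empty]

theorem interior_prunedScheme_subset_closure [TopologicalSpace α]
    (hdense : ∀ l S, interior S ⊆ closure (⋃ a ∈ F l S, U (a :: l))) (l : List β) :
    interior (prunedScheme U F l) ⊆ closure (⋃ a, prunedScheme U F (a :: l)) :=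
  (hdense l _).trans <| closure_mono <| iUnion₂_subset fun a ha =>
    subset_iUnion_of_subset a (prunedScheme_cons_of_mem ha).superset

end Pruning

section Strategies

variable {X : Type*} [TopologicalSpace X] {R : Set X} {σ : List (Set X) → Set X}

-- α answers a history `V 0, …, V n`, which has length `n + 1`, by `V n ∩ D n`.
theorem bmAlphaWinning_getLastD_inter {D : ℕ → Set X} (hDo : ∀ n, IsOpen (D n))
    (hDd : ∀ n, Dense (D n)) (hDR : ⋂ n, D n ⊆ R) :
    BMAlphaWinning R fun l => l.getLastD univ ∩ D (l.length - 1) := by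
  refine ⟨fun l W hW hWne => ?_, fun V _ _ => Subset.trans (iInter_mono fun n => ?_) hDR⟩
  · simp only [List.getLastD_concat]
    exact ⟨hW.inter (hDo _), (hDd _).inter_open_nonempty W hW hWne, inter_subset_left⟩
  · simp only [List.length_ofFn, Nat.add_sub_cancel]
    exact inter_subset_right

/-- The legality half of `BMAlphaWinning`: `σ` answers every nonempty open move by a nonempty open
subset of it, whatever the earlier moves are. -/
def IsBMStrategy (σ : List (Set X) → Set X) : Prop :=
  ∀ l : List (Set X), ∀ W : Set X, IsOpen W → W.Nonempty →
    IsOpen (σ (l ++ [W])) ∧ (σ (l ++ [W])).Nonempty ∧ σ (l ++ [W]) ⊆ W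

/-- A tree of positions of the Banach–Mazur game in which α follows `σ`, encoded as a scheme `A`
indexed by the lists of moves of β, most recent move first. The set `A l` is the last answer of α
(`univ` at the start), or `∅` when `l` is not retained in the tree; the answers to the retained
moves at a position are pairwise disjoint and dense in the previous answer. -/
structure IsBMScheme (σ A : List (Set X) → Set X) : Prop where
  nil_eq : A [] = univ
  isOpen : ∀ l, IsOpen (A l)
  antitone : CantorScheme.Antitone A
  disjoint : CantorScheme.Disjoint A
  subset_closure : ∀ l, A l ⊆ closure (⋃ W, A (W :: l))
  legal_move : ∀ l W, (A (W :: l)).Nonempty → IsOpen W ∧ W.Nonempty ∧ W ⊆ A l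
  eq_answer : ∀ l W, (A (W :: l)).Nonempty → A (W :: l) = σ (W :: l).reverse

theorem IsBMStrategy.exists_isBMScheme (hσ : IsBMStrategy σ) : ∃ A, IsBMScheme σ A := by
  set U : List (Set X) → Set X := fun l => σ l.reverse with hU
  have hanswer : ∀ l W, IsOpen W → W.Nonempty →
      IsOpen (U (W :: l)) ∧ (U (W :: l)).Nonempty ∧ U (W :: l) ⊆ W := fun l W hW hWne => by
    simpa only [hU, List.reverse_cons] using hσ l.reverse W hW hWne
  choose F hlegal hdisj hdense using fun l =>
    exists_pairwiseDisjoint_interior_subset_closure_biUnion (f := fun W => U (W :: l))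
      fun W hW hWne => (hanswer l W hW hWne).2
  have hUF : ∀ l S, ∀ W ∈ F l S, IsOpen (U (W :: l)) ∧ U (W :: l) ⊆ S := fun l S W hW => by
    obtain ⟨hWo, hWne, hWS⟩ := hlegal l S W hW
    obtain ⟨hUo, -, hUW⟩ := hanswer l W hWo hWne
    exact ⟨hUo, hUW.trans hWS⟩
  have hopen : ∀ l, IsOpen (prunedScheme U F l) :=
    isOpen_prunedScheme fun l S W hW => (hUF l S W hW).1
  exact ⟨prunedScheme U F,
    { nil_eq := rfl
      isOpen := hopen
      antitone := antitone_prunedScheme fun l S W hW => (hUF l S W hW).2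
      disjoint := disjoint_prunedScheme hdisj
      subset_closure := fun l => (hopen l).interior_eq.superset.trans
        (interior_prunedScheme_subset_closure hdense l)
      legal_move := fun l W hne => hlegal l _ W hne.some_mem.2
      eq_answer := fun l W hne => prunedScheme_cons_of_mem hne.some_mem.2 }⟩

theorem BMAlphaWinning.iInter_res_subset (hσ : BMAlphaWinning R σ) {A : List (Set X) → Set X}
    (hA : IsBMScheme σ A) (V : ℕ → Set X) : ⋂ n, A (res V n) ⊆ R := by
  intro x hx
  have hne : ∀ n, (A (V n :: res V n)).Nonempty := fun n => ⟨x, mem_iInter.1 hx (n + 1)⟩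
  have hlegal := fun n => hA.legal_move _ _ (hne n)
  have hanswer : ∀ n, σ (List.ofFn fun i : Fin (n + 1) => V i) = A (res V (n + 1)) := fun n => by
    rw [← reverse_res, PiNat.res_succ, hA.eq_answer _ _ (hne n)]
  refine hσ.2 V (fun n => ⟨(hlegal n).1, (hlegal n).2.1⟩) (fun n => ?_) (mem_iInter.2 fun n => ?_)
  · exact hanswer n ▸ (hlegal (n + 1)).2.2
  · exact hanswer n ▸ mem_iInter.1 hx (n + 1)

theorem BMAlphaWinning.mem_residual (hσ : BMAlphaWinning R σ) : R ∈ residual X := by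
  obtain ⟨A, hA⟩ := IsBMStrategy.exists_isBMScheme hσ.1
  have hres : ⋃ V : ℕ → Set X, ⋂ n, A (res V n) ∈ residual X :=
    iUnion_iInter_res_mem_residual hA.antitone hA.disjoint hA.isOpen (hA.nil_eq ▸ dense_univ)
      hA.subset_closure
  exact Filter.mem_of_superset hres (iUnion_subset (hσ.iInter_res_subset hA))

end Strategies

theorem banach_mazur_characterization {X : Type*} [TopologicalSpace X] (R : Set X) :
    (∃ σ : List (Set X) → Set X, BMAlphaWinning R σ) ↔ IsMeagre Rᶜ := by
  rw [IsMeagre, compl_compl]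
  constructor
  · rintro ⟨σ, hσ⟩
    exact BMAlphaWinning.mem_residual hσ
  · intro hR
    obtain ⟨D, hDo, hDd, hDR⟩ := exists_seq_isOpen_dense_iInter_subset hR
    exact ⟨_, bmAlphaWinning_getLastD_inter hDo hDd hDR⟩
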